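/- Let λ : ℤ₊ → ℝ satisfy (UB) and let N ≥ 1. For all t ≥ 0 and all (y,x), (y',x') ∈ W^{N,N+1}: U_t^{N,N+1}[(y,x),(y',x')] ≥ 0. -/

import Mathlib

open Complex MeasureTheory Finset
open scoped Real ComplexOrder

/-- ψ_x(w) = ∏_{k=0}^{x} λ(k)/(λ(k)−w). -/
noncomputable def psiF (lam : ℕ → ℝ) (x : ℕ) (w : ℂ) : ℂ :=
  ∏ k ∈ Finset.range (x + 1), (lam k : ℂ) / ((lam k : ℂ) - w)

/-- p_x(w) = ∏_{k=0}^{x−1} (λ(k)−w)/λ(k). -/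
noncomputable def pF (lam : ℕ → ℝ) (x : ℕ) (w : ℂ) : ℂ :=
  ∏ k ∈ Finset.range x, (((lam k : ℂ) - w) / (lam k : ℂ))

/-- e^{tL}(x,y) := −(1/λ(y))·(1/(2πi)) ∮_{|w|=R} ψ_y(w) p_x(w) e^{−tw} dw,
the contour being the counterclockwise circle of radius R centred at 0. -/
noncomputable def eL (lam : ℕ → ℝ) (R t : ℝ) (x y : ℕ) : ℂ :=
  -(1 / (lam y : ℂ)) * ((2 * (Real.pi : ℂ) * Complex.I)⁻¹ *
    ∮ w in C(0, R), psiF lam y w * pF lam x w * Complex.exp (-(t : ℂ) * w))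

/-- y ≺ x : interlacing, x_1 ≤ y_1 < x_2 ≤ y_2 < ⋯ ≤ y_N < x_{N+1}.
(Membership of (y,x) in W^{N,N+1} is exactly this condition.) -/
def Interlace {N : ℕ} (y : Fin N → ℕ) (x : Fin (N + 1) → ℕ) : Prop :=
  ∀ i : Fin N, x i.castSucc ≤ y i ∧ y i < x i.succ

instance {N : ℕ} (y : Fin N → ℕ) (x : Fin (N + 1) → ℕ) : Decidable (Interlace y x) :=
  inferInstanceAs (Decidable (∀ i : Fin N, x i.castSucc ≤ y i ∧ y i < x i.succ))

/-- The two-level Karlin–McGregor block determinant kernel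
U_t^{N,N+1}[(y,x),(y',x')] = det [[A, B],[C, D]] with
A_{ij} = e^{tL}(x_i,x'_j), B_{ij} = λ(y'_j)⁻¹ (Σ_{z=0}^{y'_j} e^{tL}(x_i,z) − 1(j ≥ i)),
C_{ij} = λ(y_i)(e^{tL}(y_i,x'_j) − e^{tL}(y_i+1,x'_j)), D_{ij} = e^{tL}(y_i,y'_j). -/
noncomputable def Ut (lam : ℕ → ℝ) (R t : ℝ) (N : ℕ)
    (y : Fin N → ℕ) (x : Fin (N + 1) → ℕ)
    (y' : Fin N → ℕ) (x' : Fin (N + 1) → ℕ) : ℂ :=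
  (Matrix.fromBlocks
    (Matrix.of fun i j => eL lam R t (x i) (x' j))
    (Matrix.of fun (i : Fin (N + 1)) (j : Fin N) =>
      (1 / (lam (y' j) : ℂ)) *
        ((∑ z ∈ Finset.range (y' j + 1), eL lam R t (x i) z)
          - if (i : ℕ) ≤ (j : ℕ) then 1 else 0))
    (Matrix.of fun (i : Fin N) (j : Fin (N + 1)) =>
      (lam (y i) : ℂ) * (eL lam R t (y i) (x' j) - eL lam R t (y i + 1) (x' j)))
    (Matrix.of fun i j => eL lam R t (y i) (y' j))).det

/-- Differentiation under the contour integral defining a Laplace-type transform. -/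
theorem hasDerivAt_circleIntegral_mul_exp {R : ℝ} (hR : 0 ≤ R) {g : ℂ → ℂ}
    (hg : ContinuousOn g (Metric.sphere 0 R)) (t : ℝ) :
    HasDerivAt (fun t : ℝ => ∮ w in C(0, R), g w * Complex.exp (-(t : ℂ) * w))
      (∮ w in C(0, R), -w * g w * Complex.exp (-(t : ℂ) * w)) t := by
  have hgc : Continuous fun θ : ℝ => g (circleMap 0 R θ) :=
    hg.comp_continuous (continuous_circleMap 0 R) fun θ => circleMap_mem_sphere 0 hR θ
  have hcm : Continuous fun θ : ℝ => circleMap 0 R θ := continuous_circleMap 0 R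
  have hexp : ∀ u : ℝ, Continuous fun θ : ℝ => Complex.exp (-(u : ℂ) * circleMap 0 R θ) :=
    fun u => Complex.continuous_exp.comp (continuous_const.mul hcm)
  have hcont : Continuous fun p : ℝ × ℝ => deriv (circleMap 0 R) p.2 •
      (-circleMap 0 R p.2 * g (circleMap 0 R p.2) *
        Complex.exp (-(p.1 : ℂ) * circleMap 0 R p.2)) := by
    simp only [deriv_circleMap, smul_eq_mul]
    have h1 : Continuous fun p : ℝ × ℝ => circleMap 0 R p.2 :=
      (continuous_circleMap 0 R).comp continuous_snd
    have h2 : Continuous fun p : ℝ × ℝ => g (circleMap 0 R p.2) := hgc.comp continuous_snd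
    exact (h1.mul continuous_const).mul ((h1.neg.mul h2).mul (Complex.continuous_exp.comp
      ((Complex.continuous_ofReal.comp continuous_fst).neg.mul h1)))
  obtain ⟨C, hC⟩ := ((isCompact_Icc (a := t - 1) (b := t + 1)).prod
    (isCompact_Icc (a := (0 : ℝ)) (b := 2 * π))).exists_bound_of_continuousOn hcont.continuousOn
  have hnhds : Set.Icc (t - 1) (t + 1) ∈ nhds t := Icc_mem_nhds (by linarith) (by linarith)
  refine (intervalIntegral.hasDerivAt_integral_of_dominated_loc_of_deriv_le
    (𝕜 := ℝ) (μ := volume) (bound := fun _ => C) (s := Set.Icc (t - 1) (t + 1))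
    (F' := fun (t : ℝ) θ => deriv (circleMap 0 R) θ • (-circleMap 0 R θ * g (circleMap 0 R θ) *
        Complex.exp (-(t : ℂ) * circleMap 0 R θ)))
    hnhds ?_ ?_ ?_ ?_ ?_ ?_).2
  · refine Filter.Eventually.of_forall fun u => Continuous.aestronglyMeasurable ?_
    simp only [deriv_circleMap, smul_eq_mul]
    exact (hcm.mul continuous_const).mul (hgc.mul (hexp _))
  · refine Continuous.intervalIntegrable ?_ _ _
    simp only [deriv_circleMap, smul_eq_mul]
    exact (hcm.mul continuous_const).mul (hgc.mul (hexp _))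
  · exact (hcont.comp (continuous_const.prodMk continuous_id)).aestronglyMeasurable
  · refine Filter.Eventually.of_forall fun θ hθ u hu => hC (u, θ) ⟨hu, ?_⟩
    rw [Set.uIoc_of_le (by positivity)] at hθ
    exact ⟨hθ.1.le, hθ.2⟩
  · exact intervalIntegrable_const
  · refine Filter.Eventually.of_forall fun θ _ u _ => ?_
    have h1 : HasDerivAt (fun x : ℝ => -(x : ℂ) * circleMap 0 R θ) (-1 * circleMap 0 R θ) u :=
      (Complex.ofRealCLM.hasDerivAt (x := u)).neg.mul_const _
    have h2 := (h1.cexp.const_mul (g (circleMap 0 R θ))).const_smul (deriv (circleMap 0 R) θ)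
    refine h2.congr_deriv ?_
    simp only [smul_eq_mul]
    ring

section Kernel

variable {lam : ℕ → ℝ} {s M R : ℝ}

theorem ofReal_rate_ne_zero (hs : 0 < s) (hlb : ∀ x, s ≤ lam x) (k : ℕ) : (lam k : ℂ) ≠ 0 :=
  Complex.ofReal_ne_zero.2 (hs.trans_le (hlb k)).ne'

theorem rate_sub_ne_zero (hs : 0 < s) (hlb : ∀ x, s ≤ lam x) (hub : ∀ x, lam x ≤ M)
    {w : ℂ} (hw : M < ‖w‖) (k : ℕ) : (lam k : ℂ) - w ≠ 0 := by
  intro h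
  rw [← sub_eq_zero.1 h, Complex.norm_real, Real.norm_of_nonneg (hs.le.trans (hlb k))] at hw
  exact absurd (hub k) (not_le.2 hw)

theorem continuous_pF (lam : ℕ → ℝ) (x : ℕ) : Continuous (pF lam x) := by
  unfold pF
  fun_prop

theorem differentiable_pF (lam : ℕ → ℝ) (x : ℕ) : Differentiable ℂ (pF lam x) := by
  unfold pF
  fun_prop

theorem differentiableAt_psiF (hs : 0 < s) (hlb : ∀ x, s ≤ lam x) (hub : ∀ x, lam x ≤ M)
    {w : ℂ} (hw : M < ‖w‖) (y : ℕ) : DifferentiableAt ℂ (psiF lam y) w := by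
  unfold psiF
  have := rate_sub_ne_zero hs hlb hub hw
  fun_prop (disch := exact this _)

theorem continuousOn_psiF_sphere (hs : 0 < s) (hlb : ∀ x, s ≤ lam x) (hub : ∀ x, lam x ≤ M)
    (hR : M < R) (y : ℕ) : ContinuousOn (psiF lam y) (Metric.sphere 0 R) := fun w hw =>
  (differentiableAt_psiF hs hlb hub (by rw [mem_sphere_zero_iff_norm.1 hw]; exact hR)
    y).continuousAt.continuousWithinAt

theorem pF_succ (hs : 0 < s) (hlb : ∀ x, s ≤ lam x) (x : ℕ) (w : ℂ) :
    (lam x : ℂ) * (pF lam (x + 1) w - pF lam x w) = -w * pF lam x w := by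
  have := ofReal_rate_ne_zero hs hlb x
  simp only [pF, Finset.prod_range_succ]
  field_simp
  ring

theorem psiF_succ (hs : 0 < s) (hlb : ∀ x, s ≤ lam x) (hub : ∀ x, lam x ≤ M)
    {w : ℂ} (hw : M < ‖w‖) (y : ℕ) :
    -w * (1 / (lam (y + 1) : ℂ) * psiF lam (y + 1) w) = psiF lam y w - psiF lam (y + 1) w := by
  have h1 := ofReal_rate_ne_zero hs hlb (y + 1)
  have h2 := rate_sub_ne_zero hs hlb hub hw (y + 1)
  simp only [psiF, Finset.prod_range_succ _ (y + 1)]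
  field_simp
  ring

theorem sum_psiF (hs : 0 < s) (hlb : ∀ x, s ≤ lam x) (hub : ∀ x, lam x ≤ M)
    {w : ℂ} (hw : M < ‖w‖) (y : ℕ) :
    -w * ∑ z ∈ Finset.range (y + 1), 1 / (lam z : ℂ) * psiF lam z w = 1 - psiF lam y w := by
  induction y with
  | zero =>
    have h1 := ofReal_rate_ne_zero hs hlb 0
    have h2 := rate_sub_ne_zero hs hlb hub hw 0
    simp [psiF]
    field_simp
    ring
  | succ y ih =>
    rw [Finset.sum_range_succ, mul_add, ih, psiF_succ hs hlb hub hw]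
    ring

theorem psiF_mul_pF_of_lt (hs : 0 < s) (hlb : ∀ x, s ≤ lam x) (hub : ∀ x, lam x ≤ M)
    {w : ℂ} (hw : M < ‖w‖) {x y : ℕ} (hxy : y < x) :
    psiF lam y w * pF lam x w
      = ∏ k ∈ Finset.Ico (y + 1) x, (((lam k : ℂ) - w) / (lam k : ℂ)) := by
  rw [psiF, pF, ← Finset.prod_range_mul_prod_Ico _ (Nat.succ_le_of_lt hxy), ← mul_assoc,
    ← Finset.prod_mul_distrib, Finset.prod_eq_one, one_mul]
  intro k _
  have h1 := ofReal_rate_ne_zero hs hlb k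
  have h2 := rate_sub_ne_zero hs hlb hub hw k
  field_simp

theorem psiF_mul_pF_of_le (hs : 0 < s) (hlb : ∀ x, s ≤ lam x) (hub : ∀ x, lam x ≤ M)
    {w : ℂ} (hw : M < ‖w‖) {x y : ℕ} (hxy : x ≤ y) :
    psiF lam y w * pF lam x w
      = ∏ k ∈ Finset.Ico x (y + 1), ((lam k : ℂ) / ((lam k : ℂ) - w)) := by
  rw [psiF, pF, ← Finset.prod_range_mul_prod_Ico _ (Nat.le_succ_of_le hxy), mul_right_comm,
    ← Finset.prod_mul_distrib, Finset.prod_eq_one, one_mul]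
  intro k _
  have h1 := ofReal_rate_ne_zero hs hlb k
  have h2 := rate_sub_ne_zero hs hlb hub hw k
  field_simp

theorem circleIntegral_eq_zero_of_differentiable {f : ℂ → ℂ} (hf : Differentiable ℂ f)
    (hR : 0 ≤ R) : (∮ w in C(0, R), f w) = 0 :=
  Complex.circleIntegral_eq_zero_of_differentiable_on_off_countable hR Set.countable_empty
    hf.continuous.continuousOn fun w _ => hf w

/-- The transition kernel only charges upward moves. -/
theorem eL_eq_zero_of_lt (hs : 0 < s) (hlb : ∀ x, s ≤ lam x) (hub : ∀ x, lam x ≤ M)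
    (hR : M < R) (t : ℝ) {x y : ℕ} (hxy : y < x) : eL lam R t x y = 0 := by
  have hR0 : 0 ≤ R := ((hs.trans_le (hlb 0)).trans_le (hub 0)).le.trans hR.le
  have : (∮ w in C(0, R), psiF lam y w * pF lam x w * Complex.exp (-(t : ℂ) * w)) =
      ∮ w in C(0, R), (∏ k ∈ Finset.Ico (y + 1) x, (((lam k : ℂ) - w) / (lam k : ℂ))) *
        Complex.exp (-(t : ℂ) * w) := by
    refine circleIntegral.integral_congr hR0 fun w hw => ?_
    have hw' : M < ‖w‖ := by rw [mem_sphere_zero_iff_norm.1 hw]; exact hR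
    simp only [psiF_mul_pF_of_lt hs hlb hub hw' hxy]
  rw [eL, this, circleIntegral_eq_zero_of_differentiable (by fun_prop) hR0, mul_zero, mul_zero]

/-- Kolmogorov's backward equation. -/
theorem hasDerivAt_eL (hs : 0 < s) (hlb : ∀ x, s ≤ lam x) (hub : ∀ x, lam x ≤ M)
    (hR : M < R) (t : ℝ) (x y : ℕ) :
    HasDerivAt (fun t => eL lam R t x y)
      ((lam x : ℂ) * (eL lam R t (x + 1) y - eL lam R t x y)) t := by
  have hR0 : 0 ≤ R := ((hs.trans_le (hlb 0)).trans_le (hub 0)).le.trans hR.le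
  have hc : ∀ z, ContinuousOn (fun w => psiF lam y w * pF lam z w) (Metric.sphere 0 R) := fun z =>
    (continuousOn_psiF_sphere hs hlb hub hR y).mul (continuous_pF lam z).continuousOn
  have hi : ∀ z, CircleIntegrable
      (fun w => psiF lam y w * pF lam z w * Complex.exp (-(t : ℂ) * w)) 0 R := fun z =>
    ((hc z).mul (by fun_prop)).circleIntegrable hR0
  refine (((hasDerivAt_circleIntegral_mul_exp hR0 (hc x) t).const_mul
    ((2 * (Real.pi : ℂ) * Complex.I)⁻¹)).const_mul (-(1 / (lam y : ℂ)))).congr_deriv ?_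
  have key : (∮ w in C(0, R), -w * (psiF lam y w * pF lam x w) * Complex.exp (-(t : ℂ) * w)) =
      (lam x : ℂ) * ((∮ w in C(0, R), psiF lam y w * pF lam (x + 1) w *
        Complex.exp (-(t : ℂ) * w)) -
        ∮ w in C(0, R), psiF lam y w * pF lam x w * Complex.exp (-(t : ℂ) * w)) := by
    rw [← circleIntegral.integral_sub (hi _) (hi _), ← circleIntegral.integral_const_mul]
    congr 1
    funext w
    linear_combination (-psiF lam y w * Complex.exp (-(t : ℂ) * w)) * pF_succ hs hlb x w
  rw [key, eL, eL]
  ring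

/-- Kolmogorov's forward equation for the distribution function, in integrated form. -/
theorem generator_sum_eL (hs : 0 < s) (hlb : ∀ x, s ≤ lam x) (hub : ∀ x, lam x ≤ M)
    (hR : M < R) (t : ℝ) (x y : ℕ) :
    (lam x : ℂ) * ((∑ z ∈ Finset.range (y + 1), eL lam R t x z) -
      ∑ z ∈ Finset.range (y + 1), eL lam R t (x + 1) z) = (lam y : ℂ) * eL lam R t x y := by
  have hR0 : 0 ≤ R := ((hs.trans_le (hlb 0)).trans_le (hub 0)).le.trans hR.le
  have hi : ∀ v z, CircleIntegrable
      (fun w => psiF lam v w * pF lam z w * Complex.exp (-(t : ℂ) * w)) 0 R := fun v z =>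
    (((continuousOn_psiF_sphere hs hlb hub hR v).mul (continuous_pF lam z).continuousOn).mul
      (by fun_prop)).circleIntegrable hR0
  have hsum : ∀ n z, ∑ v ∈ Finset.range n, eL lam R t z v =
      -(2 * (Real.pi : ℂ) * Complex.I)⁻¹ * ∮ w in C(0, R),
        (∑ v ∈ Finset.range n, 1 / (lam v : ℂ) * psiF lam v w) * pF lam z w *
          Complex.exp (-(t : ℂ) * w) := by
    intro n z
    have : ∀ w, (∑ v ∈ Finset.range n, 1 / (lam v : ℂ) * psiF lam v w) * pF lam z w *
          Complex.exp (-(t : ℂ) * w) = ∑ v ∈ Finset.range n, 1 / (lam v : ℂ) *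
          (psiF lam v w * pF lam z w * Complex.exp (-(t : ℂ) * w)) := by
      intro w
      simp only [Finset.sum_mul, mul_assoc]
    simp only [this]
    rw [circleIntegral.integral_fun_sum (f := fun v w => 1 / (lam v : ℂ) *
      (psiF lam v w * pF lam z w * Complex.exp (-(t : ℂ) * w))) fun v _ =>
        (hi v z).const_fun_smul (a := 1 / (lam v : ℂ))]
    rw [Finset.mul_sum]
    refine Finset.sum_congr rfl fun v _ => ?_
    rw [circleIntegral.integral_const_mul, eL]
    ring
  have hci : ∀ z, CircleIntegrable (fun w =>
      (∑ v ∈ Finset.range (y + 1), 1 / (lam v : ℂ) * psiF lam v w) * pF lam z w *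
          Complex.exp (-(t : ℂ) * w)) 0 R := fun z => by
    refine ContinuousOn.circleIntegrable hR0 ?_
    have := continuousOn_psiF_sphere hs hlb hub hR
    have h2 := (continuous_pF lam z).continuousOn (s := Metric.sphere 0 R)
    fun_prop
  rw [hsum, hsum, eL, ← mul_sub, ← circleIntegral.integral_sub (hci _) (hci _), mul_left_comm,
    ← circleIntegral.integral_const_mul]
  have h0 : (∮ w in C(0, R), pF lam x w * Complex.exp (-(t : ℂ) * w)) = 0 :=
    circleIntegral_eq_zero_of_differentiable
      ((differentiable_pF lam x).mul (by fun_prop)) hR0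
  have hp : CircleIntegrable (fun w => pF lam x w * Complex.exp (-(t : ℂ) * w)) 0 R :=
    ((continuous_pF lam x).mul (by fun_prop)).continuousOn.circleIntegrable hR0
  have : (∮ w in C(0, R), (lam x : ℂ) *
      ((∑ v ∈ Finset.range (y + 1), 1 / (lam v : ℂ) * psiF lam v w) * pF lam x w *
          Complex.exp (-(t : ℂ) * w) -
        (∑ v ∈ Finset.range (y + 1), 1 / (lam v : ℂ) * psiF lam v w) * pF lam (x + 1) w *
          Complex.exp (-(t : ℂ) * w))) =
      ∮ w in C(0, R), (psiF lam y w * pF lam x w * Complex.exp (-(t : ℂ) * w) -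
        pF lam x w * Complex.exp (-(t : ℂ) * w)) := by
    refine circleIntegral.integral_congr hR0 fun w hw => ?_
    have hw' : M < ‖w‖ := by rw [mem_sphere_zero_iff_norm.1 hw]; exact hR
    have h1 := sum_psiF hs hlb hub hw' y
    have h2 := pF_succ hs hlb x w
    linear_combination (-(∑ v ∈ Finset.range (y + 1), 1 / (lam v : ℂ) * psiF lam v w) *
      Complex.exp (-(t : ℂ) * w)) * h2 - pF lam x w * Complex.exp (-(t : ℂ) * w) * h1
  rw [this, circleIntegral.integral_sub (hi _ _) hp, h0]
  have := ofReal_rate_ne_zero hs hlb y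
  field_simp
  ring

end Kernel

/-- A product of at least two factors `λ / (λ - w)` has zero residue at infinity. -/
theorem circleIntegral_prod_eq_zero {lam : ℕ → ℝ} {s M R : ℝ}
    (hs : 0 < s) (hlb : ∀ x, s ≤ lam x) (hub : ∀ x, lam x ≤ M)
    (hR : M < R) {S : Finset ℕ} (hS : 2 ≤ S.card) :
    (∮ w in C(0, R), ∏ k ∈ S, ((lam k : ℂ) / ((lam k : ℂ) - w))) = 0 := by
  have hM : 0 < M := (hs.trans_le (hlb 0)).trans_le (hub 0)
  have hR0 : 0 < R := hM.trans hR
  have hdiff : ∀ w : ℂ, M < ‖w‖ →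
      DifferentiableAt ℂ (fun w => ∏ k ∈ S, ((lam k : ℂ) / ((lam k : ℂ) - w))) w := by
    intro w hw
    have := rate_sub_ne_zero hs hlb hub hw
    fun_prop (disch := exact this _)
  have hbound : ∀ r : ℝ, R ≤ r → 2 * M ≤ r →
      ‖∮ w in C(0, R), ∏ k ∈ S, ((lam k : ℂ) / ((lam k : ℂ) - w))‖ ≤ 8 * π * M ^ 2 / r := by
    intro r hr hr2
    have hr0 : 0 < r := hR0.trans_le hr
    rw [← Complex.circleIntegral_eq_of_differentiable_on_annulus_off_countable hR0 hr
      Set.countable_empty]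
    · have hle : ∀ w ∈ Metric.sphere (0 : ℂ) r,
          ‖∏ k ∈ S, ((lam k : ℂ) / ((lam k : ℂ) - w))‖ ≤ (2 * M / r) ^ 2 := by
        intro w hw
        rw [mem_sphere_zero_iff_norm] at hw
        have h1 : 2 * M / r ≤ 1 := (div_le_one hr0).2 hr2
        calc ‖∏ k ∈ S, ((lam k : ℂ) / ((lam k : ℂ) - w))‖
            ≤ ∏ k ∈ S, (2 * M / r) := by
              rw [norm_prod]
              refine Finset.prod_le_prod (fun _ _ => norm_nonneg _) fun k _ => ?_
              have hk : ‖(lam k : ℂ)‖ ≤ M := by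
                rw [Complex.norm_real, Real.norm_of_nonneg (hs.le.trans (hlb k))]
                exact hub k
              have h2 : r / 2 ≤ ‖(lam k : ℂ) - w‖ := by
                have := norm_sub_norm_le w (lam k : ℂ)
                rw [norm_sub_rev] at this
                linarith
              rw [norm_div]
              calc ‖(lam k : ℂ)‖ / ‖(lam k : ℂ) - w‖ ≤ M / (r / 2) := by gcongr
                _ = 2 * M / r := by ring
          _ = (2 * M / r) ^ S.card := by rw [Finset.prod_const]
          _ ≤ (2 * M / r) ^ 2 := pow_le_pow_of_le_one (by positivity) h1 hS
      refine (circleIntegral.norm_integral_le_of_norm_le_const hr0.le hle).trans_eq ?_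
      field_simp
      ring
    · refine fun w hw => (hdiff w ?_).continuousAt.continuousWithinAt
      have := hw.2
      simp only [Metric.mem_ball, dist_zero_right, not_lt] at this
      linarith
    · refine fun w hw => hdiff w ?_
      have := hw.1.2
      simp only [Metric.mem_closedBall, dist_zero_right, not_le] at this
      linarith
  have hlim : Filter.Tendsto (fun r : ℝ => 8 * π * M ^ 2 / r) Filter.atTop (nhds 0) :=
    tendsto_const_nhds.div_atTop Filter.tendsto_id
  rw [← norm_le_zero_iff]
  refine ge_of_tendsto hlim ?_
  filter_upwards [Filter.eventually_ge_atTop R, Filter.eventually_ge_atTop (2 * M)] with r h1 h2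
    using hbound r h1 h2

/-- At time zero the transition kernel is the identity. -/
theorem eL_zero {lam : ℕ → ℝ} {s M R : ℝ}
    (hs : 0 < s) (hlb : ∀ x, s ≤ lam x) (hub : ∀ x, lam x ≤ M)
    (hR : M < R) (x y : ℕ) : eL lam R 0 x y = if x = y then 1 else 0 := by
  have hR0 : 0 ≤ R := ((hs.trans_le (hlb 0)).trans_le (hub 0)).le.trans hR.le
  rcases lt_or_ge y x with hxy | hxy
  · rw [eL_eq_zero_of_lt hs hlb hub hR 0 hxy, if_neg hxy.ne']
  have : (∮ w in C(0, R), psiF lam y w * pF lam x w * Complex.exp (-((0 : ℝ) : ℂ) * w)) =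
      ∮ w in C(0, R), ∏ k ∈ Finset.Ico x (y + 1), ((lam k : ℂ) / ((lam k : ℂ) - w)) := by
    refine circleIntegral.integral_congr hR0 fun w hw => ?_
    have hw' : M < ‖w‖ := by rw [mem_sphere_zero_iff_norm.1 hw]; exact hR
    simp only [psiF_mul_pF_of_le hs hlb hub hw' hxy]
    simp
  rw [eL, this]
  rcases hxy.eq_or_lt with rfl | hlt
  · have h1 : (∮ w in C(0, R), ∏ k ∈ Finset.Ico x (x + 1), ((lam k : ℂ) / ((lam k : ℂ) - w))) =
        ∮ w in C(0, R), -(lam x : ℂ) * (w - (lam x : ℂ))⁻¹ := by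
      congr 1
      funext w
      rw [Nat.Ico_succ_singleton, Finset.prod_singleton, ← neg_sub w, div_neg, div_eq_mul_inv,
        neg_mul]
    have h2 : (lam x : ℂ) ∈ Metric.ball (0 : ℂ) R := by
      rw [mem_ball_zero_iff, Complex.norm_real, Real.norm_of_nonneg (hs.le.trans (hlb x))]
      exact (hub x).trans_lt hR
    rw [h1, circleIntegral.integral_const_mul, circleIntegral.integral_sub_inv_of_mem_ball h2,
      if_pos rfl]
    have := ofReal_rate_ne_zero hs hlb x
    have := Complex.two_pi_I_ne_zero
    field_simp
  · rw [circleIntegral_prod_eq_zero hs hlb hub hR (by rw [Nat.card_Ico]; omega), if_neg hlt.ne]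
    simp

theorem sum_eL_zero {lam : ℕ → ℝ} {s M R : ℝ}
    (hs : 0 < s) (hlb : ∀ x, s ≤ lam x) (hub : ∀ x, lam x ≤ M)
    (hR : M < R) (x y : ℕ) :
    ∑ z ∈ Finset.range (y + 1), eL lam R 0 x z = if x ≤ y then 1 else 0 := by
  simp [eL_zero hs hlb hub hR]

/-- The derivative of a determinant, row by row. -/
theorem hasDerivAt_det_rows {n : Type*} [Fintype n] [DecidableEq n] {A : ℝ → Matrix n n ℂ}
    {dA : Matrix n n ℂ} {t : ℝ} (h : ∀ i j, HasDerivAt (fun t => A t i j) (dA i j) t) :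
    HasDerivAt (fun t => (A t).det) (∑ i, ((A t).updateRow i (dA i)).det) t := by
  let D : ContinuousMultilinearMap ℂ (fun _ : n => n → ℂ) ℂ :=
    ⟨(Matrix.detRowAlternating (n := n) (R := ℂ)).toMultilinearMap,
      Continuous.matrix_det continuous_id⟩
  have hA : HasDerivAt (fun t => (A t : n → n → ℂ)) dA t :=
    hasDerivAt_pi.2 fun i => hasDerivAt_pi.2 fun j => h i j
  have hD := ((D.hasFDerivAt (A t)).restrictScalars ℝ).comp_hasDerivAt t hA
  exact hD.congr_deriv (D.linearDeriv_apply (A t) dA)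

/-- A solution of the linear equation `df/dt = -r f + g` with `g ≥ 0` and `f 0 ≥ 0` stays nonnegative. -/
theorem nonneg_of_hasDerivAt_sub_mul {f g : ℝ → ℂ} {r : ℝ}
    (hf : ∀ t, HasDerivAt f (g t - (r : ℂ) * f t) t) (hg : ∀ t, 0 ≤ t → 0 ≤ g t)
    (h0 : 0 ≤ f 0) {t : ℝ} (ht : 0 ≤ t) : 0 ≤ f t := by
  set h : ℝ → ℂ := fun t => (Real.exp (r * t) : ℂ) * f t with hh
  have hd : ∀ t, HasDerivAt h ((Real.exp (r * t) : ℂ) * g t) t := by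
    intro t
    have h1 : HasDerivAt (fun t : ℝ => Real.exp (r * t)) (Real.exp (r * t) * r) t := by
      simpa using ((hasDerivAt_id t).const_mul r).exp
    refine (h1.ofReal_comp.mul (hf t)).congr_deriv ?_
    push_cast
    ring
  have hpos : ∀ t, 0 ≤ t → 0 ≤ (Real.exp (r * t) : ℂ) * g t := fun t ht =>
    mul_nonneg (Complex.zero_le_real.2 (Real.exp_pos _).le) (hg t ht)
  have hre : ∀ t, HasDerivAt (fun t => (h t).re) ((Real.exp (r * t) : ℂ) * g t).re t := fun t =>
    Complex.reCLM.hasFDerivAt.comp_hasDerivAt t (hd t)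
  have him : ∀ t, HasDerivAt (fun t => (h t).im) ((Real.exp (r * t) : ℂ) * g t).im t := fun t =>
    Complex.imCLM.hasFDerivAt.comp_hasDerivAt t (hd t)
  have mre : MonotoneOn (fun t => (h t).re) (Set.Ici 0) :=
    monotoneOn_of_deriv_nonneg (convex_Ici 0)
      (fun t _ => (hre t).continuousAt.continuousWithinAt)
      (fun t _ => (hre t).differentiableAt.differentiableWithinAt)
      (fun t ht => by
        rw [(hre t).deriv]
        exact (Complex.le_def.1 (hpos t (interior_subset ht))).1)
  have cim : (h t).im = (h 0).im := by
    refine constant_of_has_deriv_right_zero (f := fun t => (h t).im) (a := 0) (b := t)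
      (fun t _ => (him t).continuousAt.continuousWithinAt) (fun u hu => ?_) t ⟨ht, le_rfl⟩
    have := (him u).hasDerivWithinAt (s := Set.Ici u)
    rwa [← (Complex.le_def.1 (hpos u hu.1)).2, Complex.zero_im] at this
  have hh0 : h 0 = f 0 := by simp [hh]
  have hnn : 0 ≤ h t := by
    rw [Complex.le_def]
    constructor
    · refine le_trans ?_ (mre (Set.mem_Ici.2 le_rfl) ht ht)
      simp only [hh0]
      exact (Complex.le_def.1 h0).1
    · rw [cim, hh0]
      exact (Complex.le_def.1 h0).2
  have : f t = (Real.exp (-(r * t)) : ℂ) * h t := by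
    simp only [hh]
    rw [← mul_assoc, ← Complex.ofReal_mul, ← Real.exp_add]
    simp
  rw [this]
  exact mul_nonneg (Complex.zero_le_real.2 (Real.exp_pos _).le) hnn

/-- The entry in row `k`, evaluated at position `a`, and column `l` of the two-level
Karlin–McGregor matrix. -/
noncomputable def blockRow (lam : ℕ → ℝ) (R : ℝ) {N : ℕ} (y' : Fin N → ℕ) (x' : Fin (N + 1) → ℕ)
    (t : ℝ) : Fin (N + 1) ⊕ Fin N → ℕ → Fin (N + 1) ⊕ Fin N → ℂ
  | Sum.inl _, a, Sum.inl j => eL lam R t a (x' j)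
  | Sum.inr _, a, Sum.inl j => (lam a : ℂ) * (eL lam R t a (x' j) - eL lam R t (a + 1) (x' j))
  | Sum.inr _, a, Sum.inr j => eL lam R t a (y' j)
  | Sum.inl i, a, Sum.inr j => (1 / (lam (y' j) : ℂ)) *
      ((∑ z ∈ Finset.range (y' j + 1), eL lam R t a z) - if (i : ℕ) ≤ (j : ℕ) then 1 else 0)

/-- The two-level Karlin–McGregor determinant as a function of all starting positions. -/
noncomputable def blockDet (lam : ℕ → ℝ) (R : ℝ) {N : ℕ} (y' : Fin N → ℕ)
    (x' : Fin (N + 1) → ℕ) (t : ℝ) (q : Fin (N + 1) ⊕ Fin N → ℕ) : ℂ :=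
  (Matrix.of fun k => blockRow lam R y' x' t k (q k)).det

theorem Ut_eq_blockDet (lam : ℕ → ℝ) (R t : ℝ) (N : ℕ) (y : Fin N → ℕ) (x : Fin (N + 1) → ℕ)
    (y' : Fin N → ℕ) (x' : Fin (N + 1) → ℕ) :
    Ut lam R t N y x y' x' = blockDet lam R y' x' t (Sum.elim x y) := by
  rw [Ut, blockDet]
  congr 1
  ext (i | i) (j | j) <;> rfl

namespace Interlace

variable {N : ℕ} {y : Fin N → ℕ} {x : Fin (N + 1) → ℕ}

theorem strictMono_upper (h : Interlace y x) : StrictMono x :=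
  Fin.strictMono_iff_lt_succ.2 fun i => (h i).1.trans_lt (h i).2

theorem le_of_le (h : Interlace y x) {i : Fin (N + 1)} {j : Fin N} (hij : (i : ℕ) ≤ j) :
    x i ≤ y j :=
  (h.strictMono_upper.monotone (show i ≤ j.castSucc from hij)).trans (h j).1

theorem lt_of_lt (h : Interlace y x) {i : Fin (N + 1)} {j : Fin N} (hij : (j : ℕ) < i) :
    y j < x i :=
  (h j).2.trans_le (h.strictMono_upper.monotone (show j.succ ≤ i from hij))

theorem le_iff (h : Interlace y x) {i : Fin (N + 1)} {j : Fin N} : x i ≤ y j ↔ (i : ℕ) ≤ j :=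
  ⟨fun hxy => not_lt.1 fun hij => (h.lt_of_lt hij).not_ge hxy, h.le_of_le⟩

theorem strictMono_lower (h : Interlace y x) : StrictMono y := fun _ j hij =>
  (h.lt_of_lt (i := j.castSucc) hij).trans_le (h j).1

end Interlace

theorem det_eq_zero_of_row_eq_mul {n : Type*} [Fintype n] [DecidableEq n] {A : Matrix n n ℂ}
    {i j : n} (hij : i ≠ j) (c : ℂ) (h : ∀ l, A i l = c * A j l) : A.det = 0 := by
  have hA : A.updateRow i (c • A j) = A := by
    rw [← show A i = c • A j from funext h, Matrix.updateRow_eq_self]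
  rw [← hA, Matrix.det_updateRow_smul, Matrix.det_updateRow_eq_zero hij.symm, mul_zero]

section BlockDet

variable {lam : ℕ → ℝ} {s M R : ℝ} {N : ℕ} {y' : Fin N → ℕ} {x' : Fin (N + 1) → ℕ}

theorem hasDerivAt_blockRow (hs : 0 < s) (hlb : ∀ x, s ≤ lam x) (hub : ∀ x, lam x ≤ M)
    (hR : M < R) (t : ℝ) (k : Fin (N + 1) ⊕ Fin N) (a : ℕ) (l : Fin (N + 1) ⊕ Fin N) :
    HasDerivAt (fun t => blockRow lam R y' x' t k a l)
      ((lam a : ℂ) * (blockRow lam R y' x' t k (a + 1) l - blockRow lam R y' x' t k a l)) t := by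
  have he := hasDerivAt_eL hs hlb hub hR t
  rcases k with i | i <;> rcases l with j | j
  · exact he a _
  · refine (((HasDerivAt.fun_sum fun z _ => he a z).sub_const _).const_mul _).congr_deriv ?_
    simp only [blockRow, ← Finset.mul_sum, Finset.sum_sub_distrib]
    ring
  · refine (((he a _).sub (he (a + 1) _)).const_mul _).congr_deriv ?_
    simp only [blockRow]
    ring
  · exact he a _

theorem blockRow_inr (hs : 0 < s) (hlb : ∀ x, s ≤ lam x) (hub : ∀ x, lam x ≤ M)
    (hR : M < R) (t : ℝ) (i : Fin N) (j : Fin (N + 1)) (a : ℕ) (l : Fin (N + 1) ⊕ Fin N) :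
    blockRow lam R y' x' t (Sum.inr i) a l = (lam a : ℂ) *
      (blockRow lam R y' x' t (Sum.inl j) a l - blockRow lam R y' x' t (Sum.inl j) (a + 1) l) := by
  rcases l with l | l
  · rfl
  · have h := generator_sum_eL hs hlb hub hR t a (y' l)
    have := ofReal_rate_ne_zero hs hlb (y' l)
    simp only [blockRow]
    rw [← mul_sub, sub_sub_sub_cancel_right, mul_left_comm, h]
    field_simp

theorem hasDerivAt_blockDet (hs : 0 < s) (hlb : ∀ x, s ≤ lam x) (hub : ∀ x, lam x ≤ M)
    (hR : M < R) (t : ℝ) (q : Fin (N + 1) ⊕ Fin N → ℕ) :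
    HasDerivAt (fun t => blockDet lam R y' x' t q)
      (∑ k, (lam (q k) : ℂ) * (blockDet lam R y' x' t (Function.update q k (q k + 1)) -
        blockDet lam R y' x' t q)) t := by
  refine (hasDerivAt_det_rows (A := fun t => Matrix.of fun k => blockRow lam R y' x' t k (q k))
    (dA := fun k l => (lam (q k) : ℂ) * (blockRow lam R y' x' t k (q k + 1) l -
      blockRow lam R y' x' t k (q k) l))
    fun k l => hasDerivAt_blockRow hs hlb hub hR t k (q k) l).congr_deriv ?_
  refine Finset.sum_congr rfl fun k _ => ?_
  set A : Matrix (Fin (N + 1) ⊕ Fin N) (Fin (N + 1) ⊕ Fin N) ℂ :=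
    Matrix.of fun k => blockRow lam R y' x' t k (q k) with hA
  have h1 : blockDet lam R y' x' t (Function.update q k (q k + 1)) =
      (A.updateRow k (blockRow lam R y' x' t k (q k + 1))).det := by
    rw [blockDet]
    congr 1
    ext i l
    by_cases hik : i = k
    · subst hik
      simp
    · simp [hik, hA]
  have h2 : blockDet lam R y' x' t q = (A.updateRow k (A k)).det := by
    rw [Matrix.updateRow_eq_self, blockDet]
  have h3 : (fun l => (lam (q k) : ℂ) * (blockRow lam R y' x' t k (q k + 1) l -
      blockRow lam R y' x' t k (q k) l)) =
      (lam (q k) : ℂ) • (blockRow lam R y' x' t k (q k + 1) + (-1 : ℂ) • A k) := by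
    funext l
    simp [hA, sub_eq_add_neg]
  rw [h1, h2, h3, Matrix.det_updateRow_smul, Matrix.det_updateRow_add, Matrix.det_updateRow_smul]
  ring

/-- Moving an upper particle off a site occupied by a lower particle leaves the determinant
unchanged; this encodes both blocking and pushing. -/
theorem blockDet_update_of_eq (hs : 0 < s) (hlb : ∀ x, s ≤ lam x) (hub : ∀ x, lam x ≤ M)
    (hR : M < R) (t : ℝ) {q : Fin (N + 1) ⊕ Fin N → ℕ} {i : Fin N} {j : Fin (N + 1)}
    (h : q (Sum.inl j) = q (Sum.inr i)) :
    blockDet lam R y' x' t (Function.update q (Sum.inl j) (q (Sum.inl j) + 1)) =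
      blockDet lam R y' x' t q := by
  set A : Matrix (Fin (N + 1) ⊕ Fin N) (Fin (N + 1) ⊕ Fin N) ℂ :=
    Matrix.of fun k => blockRow lam R y' x' t k (q k) with hA
  have hne : (Sum.inl j : Fin (N + 1) ⊕ Fin N) ≠ Sum.inr i := Sum.inl_ne_inr
  have hl := ofReal_rate_ne_zero hs hlb (q (Sum.inr i))
  have hdet := Matrix.det_updateRow_add_smul_self A hne (-(lam (q (Sum.inr i)) : ℂ)⁻¹)
  rw [show blockDet lam R y' x' t q = A.det from rfl, ← hdet, blockDet]
  congr 1
  ext k l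
  by_cases hk : k = Sum.inl j
  · subst hk
    have := blockRow_inr (y' := y') (x' := x') hs hlb hub hR t i j (q (Sum.inr i)) l
    simp only [Matrix.of_apply, Function.update_self, Matrix.updateRow_self, Pi.add_apply,
      Pi.smul_apply, smul_eq_mul, hA, this, h]
    field_simp
    ring
  · simp [hk, hA]

theorem blockDet_eq_zero_of_lower_eq (lam : ℕ → ℝ) (R t : ℝ) {q : Fin (N + 1) ⊕ Fin N → ℕ}
    {i j : Fin N} (hij : i ≠ j) (h : q (Sum.inr i) = q (Sum.inr j)) :
    blockDet lam R y' x' t q = 0 := by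
  refine Matrix.det_zero_of_row_eq (i := Sum.inr i) (j := Sum.inr j) (by simpa using hij) ?_
  funext l
  simp only [Matrix.of_apply, h]
  rcases l with l | l <;> rfl

theorem blockDet_eq_zero_of_last_lt (hs : 0 < s) (hlb : ∀ x, s ≤ lam x) (hub : ∀ x, lam x ≤ M)
    (hR : M < R) (hyx : Interlace y' x') (t : ℝ) {q : Fin (N + 1) ⊕ Fin N → ℕ}
    (h : x' (Fin.last N) < q (Sum.inl (Fin.last N))) : blockDet lam R y' x' t q = 0 := by
  refine Matrix.det_eq_zero_of_row_eq_zero (Sum.inl (Fin.last N)) fun l => ?_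
  rcases l with l | l
  · exact eL_eq_zero_of_lt hs hlb hub hR t
      ((hyx.strictMono_upper.monotone (Fin.le_last l)).trans_lt h)
  · have hy : y' l < q (Sum.inl (Fin.last N)) := (hyx.lt_of_lt (i := Fin.last N) l.2).trans h
    have hsum : ∑ z ∈ Finset.range (y' l + 1), eL lam R t (q (Sum.inl (Fin.last N))) z = 0 :=
      Finset.sum_eq_zero fun z hz => eL_eq_zero_of_lt hs hlb hub hR t
        ((Nat.lt_succ_iff.1 (Finset.mem_range.1 hz)).trans_lt hy)
    simp [blockRow, hsum]

/-- At time zero the determinant vanishes off the diagonal and equals one on it. -/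
theorem blockDet_zero_nonneg (hs : 0 < s) (hlb : ∀ x, s ≤ lam x) (hub : ∀ x, lam x ≤ M)
    (hR : M < R) (hyx' : Interlace y' x') {y : Fin N → ℕ} {x : Fin (N + 1) → ℕ}
    (hyx : Interlace y x) : 0 ≤ blockDet lam R y' x' 0 (Sum.elim x y) := by
  by_cases hdet : blockDet lam R y' x' 0 (Sum.elim x y) = 0
  · exact hdet.ge
  have hx' := hyx'.strictMono_upper
  have hy' := hyx'.strictMono_lower
  have e11 : ∀ i a j, blockRow lam R y' x' 0 (Sum.inl i) a (Sum.inl j) =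
      if a = x' j then 1 else 0 := fun i a j => eL_zero hs hlb hub hR _ _
  have e12 : ∀ (i : Fin (N + 1)) a j, (a ≤ y' j ↔ (i : ℕ) ≤ j) →
      blockRow lam R y' x' 0 (Sum.inl i) a (Sum.inr j) = 0 := fun _ a j h => by
    simp only [blockRow, sum_eL_zero hs hlb hub hR, h, sub_self, mul_zero]
  have e21 : ∀ i a j, blockRow lam R y' x' 0 (Sum.inr i) a (Sum.inl j) =
      (lam a : ℂ) * ((if a = x' j then 1 else 0) - if a + 1 = x' j then 1 else 0) :=
    fun i a j => by simp only [blockRow, eL_zero hs hlb hub hR]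
  have e22 : ∀ i a j, blockRow lam R y' x' 0 (Sum.inr i) a (Sum.inr j) =
      if a = y' j then 1 else 0 := fun i a j => eL_zero hs hlb hub hR _ _
  have agree : ∀ n : ℕ, (∀ i : Fin (N + 1), (i : ℕ) < n → x i = x' i) ∧
      ∀ i : Fin N, (i : ℕ) < n → y i = y' i := by
    intro n
    induction n with
    | zero => exact ⟨fun i hi => absurd hi (Nat.not_lt_zero _),
        fun i hi => absurd hi (Nat.not_lt_zero _)⟩
    | succ n ih =>
      obtain ⟨ihx, ihy⟩ := ih
      have hxn : ∀ i : Fin (N + 1), (i : ℕ) < n + 1 → x i = x' i := by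
        intro i hi
        rcases Nat.lt_succ_iff_lt_or_eq.1 hi with hi | rfl
        · exact ihx i hi
        by_contra hne
        refine hdet ?_
        rcases lt_or_gt_of_ne hne with hlt | hgt
        · refine Matrix.det_eq_zero_of_row_eq_zero (Sum.inl i) fun l => ?_
          rcases l with j | j
          · refine (e11 i _ _).trans (if_neg ?_)
            simp only [Sum.elim_inl]
            rcases lt_or_ge j i with hj | hj
            · rw [← ihx j hj]
              exact (hyx.strictMono_upper hj).ne'
            · exact (hlt.trans_le (hx'.monotone hj)).ne
          · refine e12 _ _ _ ?_
            simp only [Sum.elim_inl]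
            constructor
            · intro h
              by_contra! hj
              rw [← ihy j hj] at h
              exact (hyx.lt_of_lt hj).not_ge h
            · intro h
              exact hlt.le.trans (hyx'.le_of_le h)
        · have hA11 : ∀ k, x k ≠ x' i := fun k => by
            rcases lt_or_ge k i with hk | hk
            · rw [ihx k hk]
              exact (hx' hk).ne
            · exact (hgt.trans_le (hyx.strictMono_upper.monotone hk)).ne'
          have hA21 : ∀ k, y k ≠ x' i := fun k => by
            rcases lt_or_ge (k : ℕ) i with hk | hk
            · rw [ihy k hk]
              exact (hyx'.lt_of_lt hk).ne
            · exact (hgt.trans_le (hyx.le_of_le hk)).ne'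
          by_cases hex : ∃ k, y k + 1 = x' i
          · obtain ⟨k, hk⟩ := hex
            have hki : (k : ℕ) < i := by
              by_contra! h
              have := hyx.le_of_le h
              omega
            rw [blockDet, ← Matrix.det_transpose]
            refine det_eq_zero_of_row_eq_mul (i := Sum.inl i) (j := Sum.inr k) Sum.inl_ne_inr
              (-(lam (y k) : ℂ)) fun l => ?_
            rcases l with j | j
            · simp only [Matrix.transpose_apply, Matrix.of_apply, Sum.elim_inl, e11, hA11,
                if_false]
              rw [e12, mul_zero]
              rw [← ihy k hki, hyx.le_iff]
            · have hjk : y j ≠ y k + 1 := hk ▸ hA21 j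
              simp only [Matrix.transpose_apply, Matrix.of_apply, Sum.elim_inr, e21, e22,
                if_neg hjk, ← hk, ← ihy k hki, add_left_inj,
                hyx.strictMono_lower.injective.eq_iff]
              split_ifs with h
              · rw [h]
                ring
              · ring
          · push Not at hex
            refine Matrix.det_eq_zero_of_column_eq_zero (Sum.inl i) fun l => ?_
            rcases l with j | j
            · exact (e11 j _ _).trans (if_neg (hA11 j))
            · refine (e21 j _ _).trans ?_
              simp [hA21, hex]
      refine ⟨hxn, fun i hi => ?_⟩
      rcases Nat.lt_succ_iff_lt_or_eq.1 hi with hi | rfl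
      · exact ihy i hi
      have hxi : x i.castSucc = x' i.castSucc := hxn i.castSucc (Nat.lt_succ_self _)
      by_contra hne
      refine hdet ?_
      rcases lt_or_gt_of_ne hne with hlt | hgt
      · have h22 : ∀ j, y i ≠ y' j := fun j => by
          rcases lt_or_ge j i with hj | hj
          · rw [← ihy j hj]
            exact (hyx.strictMono_lower hj).ne'
          · exact (hlt.trans_le (hy'.monotone hj)).ne
        have h21 : ∀ j, y i + 1 ≠ x' j := fun j => by
          rcases le_or_gt (j : ℕ) i with hj | hj
          · rw [← hxn j (Nat.lt_succ_iff.2 hj)]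
            have := hyx.le_of_le hj
            omega
          · have := hyx'.lt_of_lt hj
            omega
        by_cases hxy : x i.castSucc = y i
        · refine det_eq_zero_of_row_eq_mul (i := Sum.inr i) (j := Sum.inl i.castSucc)
            Sum.inr_ne_inl (lam (y i) : ℂ) fun l => ?_
          rcases l with j | j
          · simp [e11, e21, h21, hxy]
          · simp only [Matrix.of_apply, Sum.elim_inr, Sum.elim_inl, e22, h22, if_false]
            rw [e12, mul_zero]
            rw [hxi, hyx'.le_iff]
        · refine Matrix.det_eq_zero_of_row_eq_zero (Sum.inr i) fun l => ?_
          rcases l with j | j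
          · have h21' : y i ≠ x' j := by
              rcases lt_trichotomy (j : ℕ) i with hj | hj | hj
              · rw [← hxn j (Nat.lt_succ_of_lt hj)]
                have h1 := hyx.strictMono_upper (show j < i.castSucc from hj)
                have h2 := (hyx i).1
                omega
              · have : j = i.castSucc := Fin.ext hj
                rw [this, ← hxi]
                exact Ne.symm hxy
              · exact (hlt.trans (hyx'.lt_of_lt hj)).ne
            simp [e21, h21, h21']
          · simp [e22, h22]
      · refine Matrix.det_eq_zero_of_column_eq_zero (Sum.inr i) fun l => ?_
        rcases l with j | j
        · refine e12 _ _ _ ?_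
          simp only [Sum.elim_inl]
          constructor
          · intro h
            exact hyx.le_iff.1 (h.trans hgt.le)
          · intro h
            rw [hxn j (Nat.lt_succ_iff.2 h)]
            exact hyx'.le_of_le h
        · refine (e22 j _ _).trans (if_neg ?_)
          simp only [Sum.elim_inr]
          rcases lt_or_ge j i with hj | hj
          · rw [ihy j hj]
            exact (hy' hj).ne
          · exact (hgt.trans_le (hyx.strictMono_lower.monotone hj)).ne'
  obtain rfl : x = x' := funext fun i => (agree (N + 1)).1 i i.2
  obtain rfl : y = y' := funext fun i => (agree N).2 i i.2
  have hblock : (Matrix.of fun k => blockRow lam R y x 0 k (Sum.elim x y k)) =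
      Matrix.fromBlocks 1 0
        (Matrix.of fun i j => blockRow lam R y x 0 (Sum.inr i) (y i) (Sum.inl j)) 1 := by
    ext (i | i) (j | j)
    · simp [e11, Matrix.one_apply, hx'.injective.eq_iff]
    · simpa using e12 i (x i) j hyx.le_iff
    · simp
    · simp [e22, Matrix.one_apply, hy'.injective.eq_iff]
  rw [blockDet, hblock, Matrix.det_fromBlocks_zero₁₂]
  simp

theorem blockDet_nonneg (hs : 0 < s) (hlb : ∀ x, s ≤ lam x) (hub : ∀ x, lam x ≤ M)
    (hR : M < R) (hyx' : Interlace y' x') (n : ℕ) :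
    ∀ q : Fin (N + 1) ⊕ Fin N → ℕ, Interlace (q ∘ Sum.inr) (q ∘ Sum.inl) →
      ∑ _k : Fin (N + 1) ⊕ Fin N, (x' (Fin.last N) + 1) ≤ n + ∑ k, q k →
      ∀ t, 0 ≤ t → 0 ≤ blockDet lam R y' x' t q := by
  induction n with
  | zero =>
    intro q hq hn t _
    refine (blockDet_eq_zero_of_last_lt hs hlb hub hR hyx' t ?_).ge
    by_contra! hle
    have hlt : ∑ k, q k < ∑ _k : Fin (N + 1) ⊕ Fin N, (x' (Fin.last N) + 1) := by
      refine Finset.sum_lt_sum_of_nonempty ⟨Sum.inl 0, Finset.mem_univ _⟩ fun k _ => ?_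
      refine Nat.lt_succ_iff.2 (le_trans ?_ hle)
      rcases k with i | i
      · exact hq.strictMono_upper.monotone (Fin.le_last i)
      · exact (hq.lt_of_lt (i := Fin.last N) i.2).le
    omega
  | succ n ih =>
    intro q hq hn t ht
    have sum_update : ∀ (q : Fin (N + 1) ⊕ Fin N → ℕ) k,
        ∑ l, Function.update q k (q k + 1) l = ∑ l, q l + 1 := by
      intro q k
      rw [← Finset.add_sum_erase _ _ (Finset.mem_univ k),
        ← Finset.add_sum_erase _ q (Finset.mem_univ k), Function.update_self,
        Finset.sum_congr rfl fun l hl => Function.update_of_ne (Finset.ne_of_mem_erase hl) _ _]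
      ring
    have step : ∀ k, (∀ t, blockDet lam R y' x' t (Function.update q k (q k + 1)) =
        blockDet lam R y' x' t q) ∨
        ∀ t, 0 ≤ t → 0 ≤ blockDet lam R y' x' t (Function.update q k (q k + 1)) := by
      intro k
      have hsum := sum_update q k
      rcases k with i | i
      · by_cases hblocked : ∃ j : Fin N, q (Sum.inl i) = q (Sum.inr j)
        · obtain ⟨j, hj⟩ := hblocked
          exact Or.inl fun t => blockDet_update_of_eq hs hlb hub hR t hj
        · push Not at hblocked
          refine Or.inr (ih _ (fun j => ?_) (by omega))
          have h1 := hq j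
          have h2 := hblocked j
          simp only [Function.comp_apply, Function.update_apply, Sum.inl.injEq, reduceCtorEq,
            if_false] at h1 ⊢
          constructor
          · split_ifs with h
            · rw [← h] at h2 ⊢
              omega
            · exact h1.1
          · split_ifs with h
            · rw [← h]
              omega
            · exact h1.2
      · right
        by_cases hpush : q (Sum.inl i.succ) = q (Sum.inr i) + 1
        · set q₁ := Function.update q (Sum.inr i) (q (Sum.inr i) + 1) with hq₁
          have heq : q₁ (Sum.inl i.succ) = q₁ (Sum.inr i) := by simp [hq₁, hpush]
          intro t ht
          by_cases hcoll : ∃ j, i ≠ j ∧ q₁ (Sum.inr i) = q₁ (Sum.inr j)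
          · obtain ⟨j, hij, hj⟩ := hcoll
            exact (blockDet_eq_zero_of_lower_eq lam R t hij hj).ge
          · push Not at hcoll
            rw [← blockDet_update_of_eq hs hlb hub hR t heq]
            refine ih _ (fun j => ?_) ?_ t ht
            · have h1 := hq j
              have h3 := hq.strictMono_upper
              by_cases hji : j = i
              · subst hji
                have hne : j.castSucc ≠ j.succ := Fin.castSucc_lt_succ.ne
                simp only [Function.comp_apply] at h1
                simp [hq₁, hne]
                omega
              · have h2 := hcoll j (Ne.symm hji)
                have hs1 : j.succ ≠ i.succ := fun h => hji (Fin.succ_injective _ h)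
                simp only [hq₁, Function.comp_apply, Function.update_apply, Sum.inl.injEq,
                  Sum.inr.injEq, reduceCtorEq, if_false, if_true, hji, hs1] at h1 h2 ⊢
                refine ⟨?_, h1.2⟩
                split_ifs with h
                · rw [← h] at hpush ⊢
                  omega
                · exact h1.1
            · rw [sum_update q₁]
              omega
        · refine ih _ (fun j => ?_) (by omega)
          have h1 := hq j
          simp only [Function.comp_apply, Function.update_apply, Sum.inr.injEq, reduceCtorEq,
            if_false] at h1 ⊢
          split_ifs with h
          · subst h
            omega
          · exact h1
    classical
    set live : Finset (Fin (N + 1) ⊕ Fin N) := Finset.univ.filter fun k =>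
      ∀ t, 0 ≤ t → 0 ≤ blockDet lam R y' x' t (Function.update q k (q k + 1)) with hlive
    refine nonneg_of_hasDerivAt_sub_mul
      (f := fun t => blockDet lam R y' x' t q)
      (g := fun t => ∑ k ∈ live, (lam (q k) : ℂ) *
        blockDet lam R y' x' t (Function.update q k (q k + 1)))
      (r := ∑ k ∈ live, lam (q k)) (fun t => ?_) (fun t ht => ?_) ?_ ht
    · refine (hasDerivAt_blockDet hs hlb hub hR t q).congr_deriv ?_
      rw [← Finset.sum_subset (Finset.subset_univ live)]
      · push_cast
        rw [Finset.sum_mul, ← Finset.sum_sub_distrib]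
        exact Finset.sum_congr rfl fun k _ => mul_sub _ _ _
      · intro k _ hk
        have := (step k).resolve_right (by simpa [hlive] using hk) t
        rw [this, sub_self, mul_zero]
    · refine Finset.sum_nonneg fun k hk => mul_nonneg ?_ ((Finset.mem_filter.1 hk).2 t ht)
      exact Complex.zero_le_real.2 (hs.le.trans (hlb _))
    · have := blockDet_zero_nonneg hs hlb hub hR hyx' hq
      rwa [Sum.elim_comp_inl_inr] at this

end BlockDet

/-- for all t ≥ 0 and (y,x),(y',x') ∈ W^{N,N+1},
U_t^{N,N+1}[(y,x),(y',x')] ≥ 0 (in the complex order, i.e. it is real and nonnegative). -/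
theorem stmt_3 (lam : ℕ → ℝ) (s M : ℝ) (hs : 0 < s)
    (hlb : ∀ x, s ≤ lam x) (hub : ∀ x, lam x ≤ M)
    (R : ℝ) (hR : M < R) (N : ℕ) (hN : 1 ≤ N) (t : ℝ) (ht : 0 ≤ t)
    (y : Fin N → ℕ) (x : Fin (N + 1) → ℕ) (hyx : Interlace y x)
    (y' : Fin N → ℕ) (x' : Fin (N + 1) → ℕ) (hy'x' : Interlace y' x') :
    0 ≤ Ut lam R t N y x y' x' := by
  rw [Ut_eq_blockDet]
  exact blockDet_nonneg hs hlb hub hR hy'x' _ (Sum.elim x y) hyx (Nat.le_add_right _ _) t ht
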